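/- arXiv:2406.16857 — 2 statements merged into one kernel-verified Lean document; each statement's English description precedes it below -/
import Mathlib

section
/- For any ρ ∈ (0,1] and n ∈ ℕ, the sum over i from 0 to n of Γ(nρ+1)/(Γ(iρ+1)·Γ((n−i)ρ+1)) is at most 2^(nρ)/ρ. -/
open Real Set Filter Topology MeasureTheory

theorem gint_integrable {s t : ℝ} (hs : 0 < s) (ht : 0 < t) :
    IntegrableOn (fun x : ℝ => x ^ (s - 1) * rexp (-(t * x))) (Ioi 0) := by
  have := integrableOn_rpow_mul_exp_neg_mul_rpow (p := 1) (s := s - 1) (b := t) (by linarith)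
    one_pos ht
  simpa [neg_mul] using this

theorem gint_complex {s : ℝ} (hs : 0 < s) {z : ℂ} (hz : 0 < z.re) :
    ∫ x in Ioi (0:ℝ), ((x ^ (s - 1) : ℝ) : ℂ) * Complex.exp (-(z * x)) =
      (Real.Gamma s : ℂ) * z ^ (-(s : ℂ)) := by
  set μ : Measure ℝ := (volume.restrict (Ioi (0:ℝ))).withDensity
    (fun x => ENNReal.ofReal (x ^ (s - 1))) with hμ
  have hmeas : Measurable (fun x : ℝ => ENNReal.ofReal (x ^ (s - 1))) := by fun_prop
  have hfin : ∀ᵐ x ∂(volume.restrict (Ioi (0:ℝ))), ENNReal.ofReal (x ^ (s - 1)) < ⊤ := by simp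
  have key : ∀ w : ℂ, ProbabilityTheory.complexMGF id μ w =
      ∫ x in Ioi (0:ℝ), ((x ^ (s - 1) : ℝ) : ℂ) * Complex.exp (w * x) := by
    intro w
    rw [ProbabilityTheory.complexMGF, hμ,
      integral_withDensity_eq_integral_toReal_smul hmeas hfin]
    refine setIntegral_congr_fun measurableSet_Ioi fun x hx => ?_
    have hx' : (0:ℝ) ≤ x ^ (s - 1) := rpow_nonneg (le_of_lt hx) _
    simp [ENNReal.toReal_ofReal hx']
  have hset : ∀ t : ℝ, t < 0 → t ∈ ProbabilityTheory.integrableExpSet id μ := by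
    intro t ht
    simp only [ProbabilityTheory.integrableExpSet, Set.mem_ofPred_eq]
    rw [hμ, integrable_withDensity_iff_integrable_smul' hmeas hfin]
    refine (gint_integrable hs (t := -t) (by linarith)).congr_fun (fun x hx => ?_) measurableSet_Ioi
    have hx' : (0:ℝ) ≤ x ^ (s - 1) := rpow_nonneg (le_of_lt hx) _
    simp [ENNReal.toReal_ofReal hx']
  have hint : ∀ t : ℝ, t < 0 → t ∈ interior (ProbabilityTheory.integrableExpSet id μ) := by
    intro t ht
    exact interior_maximal (fun t ht => hset t ht) isOpen_Iio ht
  set U : Set ℂ := {w | w.re < 0} with hU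
  have hUo : IsOpen U := isOpen_lt Complex.continuous_re continuous_const
  have h1 : AnalyticOnNhd ℂ (ProbabilityTheory.complexMGF id μ) U := fun w hw =>
    ProbabilityTheory.analyticAt_complexMGF (hint _ hw)
  have h2 : AnalyticOnNhd ℂ (fun w : ℂ => (Real.Gamma s : ℂ) * (-w) ^ (-(s : ℂ))) U := by
    apply DifferentiableOn.analyticOnNhd _ hUo
    intro w hw
    apply DifferentiableAt.differentiableWithinAt
    apply DifferentiableAt.const_mul
    refine DifferentiableAt.cpow_const (by fun_prop) ?_
    left
    have : w.re < 0 := hw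
    simpa using this
  have hpre : IsPreconnected U := (convex_halfSpace_re_lt 0).isPreconnected
  have hreal : ∀ t : ℝ, t < 0 → ProbabilityTheory.complexMGF id μ (t : ℂ) =
      (Real.Gamma s : ℂ) * (-(t : ℂ)) ^ (-(s : ℂ)) := by
    intro t ht
    rw [key]
    have := Real.integral_rpow_mul_exp_neg_mul_Ioi hs (r := -t) (by linarith)
    have h3 : ∀ x : ℝ, ((x ^ (s - 1) : ℝ) : ℂ) * Complex.exp (t * x) =
      ((x ^ (s - 1) * rexp (-(-t * x)) : ℝ) : ℂ) := by intro x; push_cast; simp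
    simp_rw [h3]
    rw [integral_complex_ofReal, this]
    rw [one_div, Real.inv_rpow (by linarith), ← Real.rpow_neg (by linarith)]
    rw [Complex.ofReal_mul, Complex.ofReal_cpow (by linarith)]
    push_cast
    ring
  have hfreq : ∃ᶠ w in 𝓝[≠] (-1 : ℂ), ProbabilityTheory.complexMGF id μ w =
      (Real.Gamma s : ℂ) * (-w) ^ (-(s : ℂ)) := by
    have ht : Tendsto (fun t : ℝ => (t : ℂ)) (𝓝[≠] (-1 : ℝ)) (𝓝[≠] (-1 : ℂ)) := by
      apply tendsto_nhdsWithin_of_tendsto_nhds_of_eventually_within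
      · have : Tendsto (fun t : ℝ => (t : ℂ)) (𝓝 (-1 : ℝ)) (𝓝 ((-1 : ℝ) : ℂ)) :=
          Complex.continuous_ofReal.tendsto _
        simpa using this.mono_left nhdsWithin_le_nhds
      · filter_upwards [self_mem_nhdsWithin] with t ht
        intro h
        apply ht
        have h' : (t : ℂ) = ((-1 : ℝ) : ℂ) := by simpa using h
        exact_mod_cast h'
    apply ht.frequently
    apply Eventually.frequently
    have : ∀ᶠ t : ℝ in 𝓝[≠] (-1 : ℝ), t < 0 :=
      nhdsWithin_le_nhds (eventually_lt_nhds (by norm_num))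
    filter_upwards [this] with t ht
    exact hreal t ht
  have := h1.eqOn_of_preconnected_of_frequently_eq h2 hpre (z₀ := -1) (by simp [hU]) hfreq
    (x := -z) (by simpa [hU] using hz)
  rw [key] at this
  simpa [neg_mul] using this

noncomputable def gf (s : ℝ) : ℝ → ℂ :=
  (Ioi (0:ℝ)).indicator (fun x => ((x ^ (s - 1) * rexp (-x) : ℝ) : ℂ))

theorem gf_integrable {s : ℝ} (hs : 0 < s) : Integrable (gf s) := by
  rw [gf, integrable_indicator_iff measurableSet_Ioi]
  have := gint_integrable hs one_pos
  simp only [one_mul] at this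
  exact this.ofReal

theorem gf_continuous {s : ℝ} (hs : 1 < s) : Continuous (gf s) := by
  have : gf s = fun x : ℝ => (((max x 0) ^ (s - 1) * rexp (-x) : ℝ) : ℂ) := by
    ext x
    by_cases hx : 0 < x
    · simp [gf, hx, max_eq_left hx.le]
    · have hx' : x ≤ 0 := not_lt.mp hx
      have hs' : s - 1 ≠ 0 := by linarith
      simp [gf, hx, max_eq_right hx', Real.zero_rpow hs']
  rw [this]
  refine Complex.continuous_ofReal.comp (Continuous.mul ?_ (by fun_prop))
  exact (continuous_id.max continuous_const).rpow_const (fun x => Or.inr (by linarith))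

open FourierTransform in
theorem gf_fourier {s : ℝ} (hs : 0 < s) (w : ℝ) :
    𝓕 (gf s) w = (Real.Gamma s : ℂ) * (1 + 2 * π * w * Complex.I) ^ (-(s : ℂ)) := by
  rw [Real.fourier_real_eq_integral_exp_smul,
    ← gint_complex hs (z := 1 + 2 * π * w * Complex.I) (by simp)]
  rw [← integral_indicator measurableSet_Ioi]
  congr 1
  ext x
  by_cases hx : 0 < x
  · simp only [gf, mem_Ioi, hx, indicator_of_mem, smul_eq_mul]
    push_cast
    rw [mul_left_comm, ← Complex.exp_add]
    congr 2
    ring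
  · simp [gf, hx]

theorem line_integrable {s : ℝ} (hs : 1 < s) :
    Integrable (fun w : ℝ => ((1 : ℂ) + 2 * π * w * Complex.I) ^ (-(s : ℂ))) := by
  have h1 : Integrable (fun x : ℝ => (1 + ‖x‖ ^ 2) ^ (-s / 2)) volume :=
    integrable_rpow_neg_one_add_norm_sq (by simpa using hs)
  have h2 := h1.comp_mul_left' (R := 2 * π) (by positivity)
  refine h2.mono' ?_ ?_
  · apply Continuous.aestronglyMeasurable
    refine Continuous.cpow (by fun_prop) continuous_const ?_
    intro x
    left
    simp
  · refine Eventually.of_forall fun w => ?_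
    rw [← Complex.ofReal_neg, Complex.norm_cpow_real]
    have : ‖(1 : ℂ) + 2 * π * w * Complex.I‖ = (1 + ‖2 * π * w‖ ^ 2) ^ (1 / 2 : ℝ) := by
      have := Complex.norm_add_mul_I 1 (2 * π * w)
      push_cast at this
      rw [this, Real.sqrt_eq_rpow, Real.norm_eq_abs, sq_abs, one_pow]
    rw [this, ← Real.rpow_mul (by positivity)]
    apply le_of_eq
    congr 1
    ring

open FourierTransform in
theorem line_integral {s r : ℝ} (hs : 0 < s) (hr : 1 < r) :
    ∫ w : ℝ, ((1 : ℂ) + 2 * π * w * Complex.I) ^ (-(s : ℂ)) *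
      ((1 : ℂ) - 2 * π * w * Complex.I) ^ (-(r : ℂ)) =
    ((Real.Gamma (s + r - 1) / (Real.Gamma s * Real.Gamma r) * 2 ^ (-(s + r - 1)) : ℝ) : ℂ) := by
  have hr0 : 0 < r := by linarith
  have hFg : Integrable (𝓕 (gf r)) := by
    have : 𝓕 (gf r) = fun w : ℝ => (Real.Gamma r : ℂ) *
        (1 + 2 * π * w * Complex.I) ^ (-(r : ℂ)) := funext (gf_fourier hr0)
    rw [this]
    exact (line_integrable hr).const_mul _
  have hinv : ∀ x, 𝓕 (fun ξ => 𝓕 (gf r) (-ξ)) x = gf r x := by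
    intro x
    rw [← Real.fourierInv_eq_fourier_comp_neg]
    exact (gf_integrable hr0).fourierInv_fourier_eq hFg (gf_continuous hr).continuousAt
  have hpars : ∫ ξ, 𝓕 (gf s) ξ • 𝓕 (gf r) (-ξ) =
      ∫ x, gf s x • 𝓕 (fun ξ => 𝓕 (gf r) (-ξ)) x := by
    simpa using! (VectorFourier.integral_fourierIntegral_smul_eq_flip (L := innerₗ ℝ)
      Real.continuous_fourierChar continuous_inner (gf_integrable hs) hFg.comp_neg)
  simp_rw [hinv, gf_fourier hs, gf_fourier hr0, smul_eq_mul] at hpars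
  have hR : ∫ x, gf s x * gf r x =
      ((Real.Gamma (s + r - 1) * 2 ^ (-(s + r - 1)) : ℝ) : ℂ) := by
    have h1 := Real.integral_rpow_mul_exp_neg_mul_Ioi (a := s + r - 1) (by linarith) two_pos
    rw [one_div, Real.inv_rpow (by norm_num), ← Real.rpow_neg (by norm_num)] at h1
    rw [mul_comm, ← h1, ← integral_complex_ofReal, ← integral_indicator measurableSet_Ioi]
    congr 1
    ext x
    by_cases hx : 0 < x
    · simp only [gf, mem_Ioi, hx, indicator_of_mem]
      rw [← Complex.ofReal_mul]
      congr 1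
      rw [show s + r - 1 - 1 = (s - 1) + (r - 1) by ring, Real.rpow_add hx,
        show -(2 * x) = -x + -x by ring, Real.exp_add]
      ring
    · simp [gf, hx]
  rw [hR] at hpars
  have hGs : (Real.Gamma s : ℂ) ≠ 0 := by exact_mod_cast (Real.Gamma_pos_of_pos hs).ne'
  have hGr : (Real.Gamma r : ℂ) ≠ 0 := by exact_mod_cast (Real.Gamma_pos_of_pos hr0).ne'
  have hL : ∀ ξ : ℝ, (Real.Gamma s : ℂ) * (1 + 2 * π * ξ * Complex.I) ^ (-(s : ℂ)) *
      ((Real.Gamma r : ℂ) * (1 + 2 * π * (-ξ : ℝ) * Complex.I) ^ (-(r : ℂ))) =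
      ((Real.Gamma s : ℂ) * Real.Gamma r) * (((1 : ℂ) + 2 * π * ξ * Complex.I) ^ (-(s : ℂ)) *
      ((1 : ℂ) - 2 * π * ξ * Complex.I) ^ (-(r : ℂ))) := by
    intro ξ
    have : (1 + 2 * π * (-ξ : ℝ) * Complex.I : ℂ) = (1 : ℂ) - 2 * π * ξ * Complex.I := by
      push_cast; ring
    rw [this]; ring
  simp_rw [hL] at hpars
  rw [integral_const_mul] at hpars
  rw [← mul_right_inj' (mul_ne_zero hGs hGr), hpars, ← Complex.ofReal_mul, ← Complex.ofReal_mul]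
  congr 1
  have := (Real.Gamma_pos_of_pos hs).ne'
  have := (Real.Gamma_pos_of_pos hr0).ne'
  field_simp

noncomputable def J (a b : ℝ) : ℂ :=
  ∫ φ in (-(π / 2))..(π / 2), ((cos φ ^ a : ℝ) : ℂ) * Complex.exp (((a - 2 * b) * φ : ℝ) * Complex.I)

noncomputable def bin (a b : ℝ) : ℝ :=
  Real.Gamma (a + 1) / (Real.Gamma (b + 1) * Real.Gamma (a - b + 1))

theorem J_base {a b : ℝ} (hb : -1 < b) (hc : 0 < a - b) :
    J a b = ((π * 2 ^ (-a) * bin a b : ℝ) : ℂ) := by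
  have h := line_integral (s := b + 1) (r := a - b + 1) (by linarith) (by linarith)
  have himg : (fun φ => tan φ / (2 * π)) '' Ioo (-(π / 2)) (π / 2) = univ := by
    apply eq_univ_of_forall
    intro y
    have : (2 * π * y) ∈ tan '' Ioo (-(π / 2)) (π / 2) := by rw [Real.image_tan_Ioo]; trivial
    obtain ⟨x, hx, hxy⟩ := this
    refine ⟨x, hx, ?_⟩
    simp only [hxy]
    field_simp
  have hinj : InjOn (fun φ => tan φ / (2 * π)) (Ioo (-(π / 2)) (π / 2)) := by
    intro x hx y hy hxy
    have hp : (2 * π) ≠ 0 := by positivity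
    exact Real.injOn_tan hx hy ((div_left_inj' hp).mp hxy)
  rw [← setIntegral_univ, ← himg, integral_image_eq_integral_abs_deriv_smul measurableSet_Ioo
    (f' := fun φ => (1 / cos φ ^ 2) / (2 * π))
    (fun x hx => (((Real.hasDerivAt_tan (Real.cos_pos_of_mem_Ioo hx).ne').div_const
      (2 * π))).hasDerivWithinAt) hinj] at h
  have hcongr : ∀ φ ∈ Ioo (-(π / 2)) (π / 2), |(1 / cos φ ^ 2) / (2 * π)| •
      (((1 : ℂ) + 2 * π * (tan φ / (2 * π) : ℝ) * Complex.I) ^ (-((b + 1 : ℝ) : ℂ)) *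
      ((1 : ℂ) - 2 * π * (tan φ / (2 * π) : ℝ) * Complex.I) ^ (-((a - b + 1 : ℝ) : ℂ))) =
      (1 / (2 * π) : ℂ) * (((cos φ ^ a : ℝ) : ℂ) *
        Complex.exp (((a - 2 * b) * φ : ℝ) * Complex.I)) := by
    intro φ hφ
    have hcos := Real.cos_pos_of_mem_Ioo hφ
    have hpi : (π : ℂ) ≠ 0 := by exact_mod_cast Real.pi_ne_zero
    have hcosC : Complex.cos φ ≠ 0 := by
      rw [← Complex.ofReal_cos]; exact_mod_cast hcos.ne'
    have gen : ∀ (ψ : ℝ), ψ ∈ Ioo (-(π / 2)) (π / 2) → ∀ t : ℝ,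
        ((1 : ℂ) + tan ψ * Complex.I) ^ (-(t : ℂ)) =
        ((cos ψ ^ t : ℝ) : ℂ) * Complex.exp ((-(t * ψ) : ℝ) * Complex.I) := by
      intro ψ hψ t
      have hcos := Real.cos_pos_of_mem_Ioo hψ
      have hcosC : Complex.cos ψ ≠ 0 := by
        rw [← Complex.ofReal_cos]; exact_mod_cast hcos.ne'
      have e1 : ((1 : ℂ) + tan ψ * Complex.I) =
          Complex.exp ((-Real.log (cos ψ) : ℝ) + ψ * Complex.I) := by
        rw [Complex.exp_add, ← Complex.ofReal_exp, Real.exp_neg, Real.exp_log hcos,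
          Complex.exp_mul_I, Complex.ofReal_tan, Complex.tan_eq_sin_div_cos]
        push_cast
        field_simp
      have hlog : Complex.log ((1 : ℂ) + tan ψ * Complex.I) =
          (-Real.log (cos ψ) : ℝ) + ψ * Complex.I := by
        rw [e1]
        have h1 := hψ.1
        have h2 := hψ.2
        have h3 := Real.pi_pos
        apply Complex.log_exp
        · simp only [Complex.add_im, Complex.ofReal_im, Complex.mul_im, Complex.ofReal_re,
            Complex.I_im, Complex.I_re]
          linarith
        · simp only [Complex.add_im, Complex.ofReal_im, Complex.mul_im, Complex.ofReal_re,
            Complex.I_im, Complex.I_re]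
          linarith
      rw [Complex.cpow_def_of_ne_zero (by rw [e1]; exact Complex.exp_ne_zero _), hlog,
        Real.rpow_def_of_pos hcos, Complex.ofReal_exp, ← Complex.exp_add]
      congr 1
      push_cast
      ring
    have e1 : (1 : ℂ) + 2 * π * (tan φ / (2 * π) : ℝ) * Complex.I = 1 + tan φ * Complex.I := by
      push_cast; field_simp
    have e2 : (1 : ℂ) - 2 * π * (tan φ / (2 * π) : ℝ) * Complex.I =
        1 + tan (-φ) * Complex.I := by
      rw [Real.tan_neg]; push_cast; field_simp; ring
    have hφ' : -φ ∈ Ioo (-(π / 2)) (π / 2) := ⟨by linarith [hφ.2], by linarith [hφ.1]⟩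
    rw [e1, e2, gen φ hφ, gen (-φ) hφ', Real.cos_neg, abs_of_nonneg (by positivity),
      Complex.real_smul]
    have e3 : cos φ ^ a = (1 / cos φ ^ 2) * (cos φ ^ (b + 1) * cos φ ^ (a - b + 1)) := by
      rw [← Real.rpow_add hcos, show b + 1 + (a - b + 1) = a + 2 by ring, Real.rpow_add hcos]
      have : cos φ ^ (2:ℝ) = cos φ ^ 2 := by norm_cast
      rw [this]
      field_simp
    have e4 : Complex.exp (((a - 2 * b) * φ : ℝ) * Complex.I) =
        Complex.exp ((-((b + 1) * φ) : ℝ) * Complex.I) *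
        Complex.exp ((-((a - b + 1) * -φ) : ℝ) * Complex.I) := by
      rw [← Complex.exp_add]; congr 1; push_cast; ring
    rw [e3, e4]
    push_cast
    ring
  rw [setIntegral_congr_fun measurableSet_Ioo hcongr, integral_const_mul] at h
  rw [J, intervalIntegral.integral_of_le (by linarith [Real.pi_pos]), integral_Ioc_eq_integral_Ioo]
  have hpi : (2 * π : ℂ) ≠ 0 := by exact_mod_cast (by positivity : (2 * π) ≠ 0)
  rw [one_div, inv_mul_eq_iff_eq_mul₀ hpi] at h
  rw [h, show (2 * π : ℂ) = ((2 * π : ℝ) : ℂ) by push_cast; rfl, ← Complex.ofReal_mul]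
  congr 1
  rw [show b + 1 + (a - b + 1) - 1 = a + 1 by ring, bin, neg_add, Real.rpow_add two_pos,
    Real.rpow_neg_one]
  ring

theorem J_intervalIntegrable {a : ℝ} (ha : 0 < a) (k : ℝ) : IntervalIntegrable
    (fun φ : ℝ => ((cos φ ^ a : ℝ) : ℂ) * Complex.exp ((k * φ : ℝ) * Complex.I)) volume
    (-(π / 2)) (π / 2) := by
  apply Continuous.intervalIntegrable
  refine Continuous.mul (Complex.continuous_ofReal.comp
    (Real.continuous_cos.rpow_const (fun x => Or.inr ha.le))) (by fun_prop)

theorem J_pascal {a : ℝ} (ha : 0 < a) (b : ℝ) :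
    J (a + 1) (b + 1) = (1 / 2) * (J a (b + 1) + J a b) := by
  rw [J, J, J, ← intervalIntegral.integral_add (J_intervalIntegrable ha _)
    (J_intervalIntegrable ha _), ← intervalIntegral.integral_const_mul]
  apply intervalIntegral.integral_congr
  intro φ hφ
  rw [uIcc_of_le (by linarith [Real.pi_pos])] at hφ
  have hcos := Real.cos_nonneg_of_mem_Icc hφ
  simp only
  rw [Real.rpow_add_of_nonneg hcos ha.le zero_le_one, Real.rpow_one, Complex.ofReal_mul,
    Complex.ofReal_cos, Complex.cos]
  have e1 : Complex.exp (((a - 2 * (b + 1)) * φ : ℝ) * Complex.I) =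
      Complex.exp (((a + 1 - 2 * (b + 1)) * φ : ℝ) * Complex.I) *
      Complex.exp (-φ * Complex.I) := by
    rw [← Complex.exp_add]; congr 1; push_cast; ring
  have e2 : Complex.exp (((a - 2 * b) * φ : ℝ) * Complex.I) =
      Complex.exp (((a + 1 - 2 * (b + 1)) * φ : ℝ) * Complex.I) *
      Complex.exp (φ * Complex.I) := by
    rw [← Complex.exp_add]; congr 1; push_cast; ring
  rw [e1, e2]
  ring

theorem inv_Gamma_rec (s : ℝ) : (Real.Gamma s)⁻¹ = s * (Real.Gamma (s + 1))⁻¹ := by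
  rcases eq_or_ne s 0 with rfl | h
  · simp
  · rw [Real.Gamma_add_one h, mul_inv, mul_inv_cancel_left₀ h]

theorem bin_pascal {a : ℝ} (ha : 0 < a) (b : ℝ) :
    bin (a + 1) (b + 1) = bin a (b + 1) + bin a b := by
  simp only [bin, div_eq_mul_inv, mul_inv]
  rw [Real.Gamma_add_one (by linarith : a + 1 ≠ 0), inv_Gamma_rec (b + 1),
    show a - (b + 1) + 1 = a - b by ring, show a + 1 - (b + 1) + 1 = a - b + 1 by ring,
    inv_Gamma_rec (a - b)]
  ring

theorem J_neg (k : ℕ) : ∀ {a b : ℝ}, 0 < a → -1 - (k : ℝ) < b → b ≤ 0 →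
    J a b = ((π * 2 ^ (-a) * bin a b : ℝ) : ℂ) := by
  induction k with
  | zero =>
    intro a b ha hb hb0
    exact J_base (by simpa using hb) (by linarith)
  | succ k ih =>
    intro a b ha hb hb0
    by_cases h1 : -1 < b
    · exact J_base h1 (by linarith)
    push Not at h1
    push_cast at hb
    have e1 := ih (a := a + 1) (b := b + 1) (by linarith) (by linarith) (by linarith)
    have e2 := ih (a := a) (b := b + 1) ha (by linarith) (by linarith)
    have e3 := J_pascal ha b
    have e4 : J a b = 2 * J (a + 1) (b + 1) - J a (b + 1) := by rw [e3]; ring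
    rw [e4, e1, e2, bin_pascal ha, neg_add, Real.rpow_add two_pos, Real.rpow_neg_one]
    push_cast
    ring

theorem J_symm (a b : ℝ) : J a (a - b) = J a b := by
  have h := intervalIntegral.integral_comp_neg (a := -(π / 2)) (b := π / 2)
    (fun φ : ℝ => ((cos φ ^ a : ℝ) : ℂ) * Complex.exp (((a - 2 * b) * φ : ℝ) * Complex.I))
  rw [neg_neg] at h
  rw [J, J, ← h]
  congr 1
  ext φ
  rw [Real.cos_neg]
  congr 4
  ring

theorem bin_symm (a b : ℝ) : bin a (a - b) = bin a b := by
  rw [bin, bin, sub_sub_cancel, mul_comm]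

theorem J_eq {a : ℝ} (ha : 0 < a) (b : ℝ) : J a b = ((π * 2 ^ (-a) * bin a b : ℝ) : ℂ) := by
  have hneg : ∀ b : ℝ, b ≤ 0 → J a b = ((π * 2 ^ (-a) * bin a b : ℝ) : ℂ) := by
    intro b hb
    obtain ⟨k, hk⟩ := exists_nat_gt (-1 - b)
    exact J_neg k ha (by linarith) hb
  rcases le_or_gt b 0 with hb | hb
  · exact hneg b hb
  rcases lt_or_ge b a with hba | hba
  · exact J_base (by linarith) (by linarith)
  · rw [← J_symm, hneg _ (by linarith), bin_symm]

theorem hasSum_bin {ρ a : ℝ} (hρ0 : 0 < ρ) (hρ1 : ρ ≤ 1) (ha : 0 < a)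
    (hsum : Summable (fun j : ℤ => bin a (j * ρ))) :
    HasSum (fun j : ℤ => bin a (j * ρ)) (2 ^ a / ρ) := by
  set T : ℝ := π / ρ with hT
  have hpi := Real.pi_pos
  have hT0 : 0 < T := by positivity
  have hTpi : π ≤ T := by rw [hT, le_div_iff₀ hρ0]; nlinarith
  have : Fact (0 < T) := ⟨hT0⟩
  set cl : ℝ → ℝ := fun φ => max (-(π / 2)) (min (π / 2) φ) with hcl
  have hcl_mid : ∀ φ, -(π / 2) ≤ φ → φ ≤ π / 2 → cl φ = φ := by
    intro φ h1 h2; simp only [hcl]; rw [min_eq_right h2, max_eq_right h1]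
  have hcl_hi : ∀ φ, π / 2 ≤ φ → cl φ = π / 2 := by
    intro φ h1; simp only [hcl]; rw [min_eq_left h1, max_eq_right (by linarith)]
  have hcl_lo : ∀ φ, φ ≤ -(π / 2) → cl φ = -(π / 2) := by
    intro φ h1; simp only [hcl]; rw [min_eq_right (by linarith), max_eq_left h1]
  set f : ℝ → ℂ := fun φ => ((cos (cl φ) ^ a : ℝ) : ℂ) * Complex.exp ((a * φ : ℝ) * Complex.I)
    with hf
  have hf_hi : ∀ φ, π / 2 ≤ φ → f φ = 0 := by
    intro φ h; simp [hf, hcl_hi φ h, Real.zero_rpow ha.ne']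
  have hf_lo : ∀ φ, φ ≤ -(π / 2) → f φ = 0 := by
    intro φ h; simp [hf, hcl_lo φ h, Real.zero_rpow ha.ne']
  have hfc : Continuous f := by
    have : Continuous cl := by fun_prop
    refine Continuous.mul (Complex.continuous_ofReal.comp
      ((Real.continuous_cos.comp this).rpow_const (fun x => Or.inr ha.le))) (by fun_prop)
  have hper : f (-(T / 2)) = f (-(T / 2) + T) := by
    rw [hf_lo _ (by linarith), hf_hi _ (by linarith)]
  set F : C(AddCircle T, ℂ) := ⟨AddCircle.liftIco T (-(T / 2)) f,
    AddCircle.liftIco_continuous hper hfc.continuousOn⟩ with hF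
  have hcoef : ∀ j : ℤ, fourierCoeff F j = ((ρ * 2 ^ (-a) * bin a (j * ρ) : ℝ) : ℂ) := by
    intro j
    have h1 : fourierCoeff F j = fourierCoeff (AddCircle.liftIco T (-(T / 2)) f) j := rfl
    rw [h1, fourierCoeff_liftIco_eq, fourierCoeffOn_eq_integral]
    set g : ℝ → ℂ := fun x => (fourier (-j) (x : AddCircle T)) * f x with hg
    have hgc : Continuous g := by
      refine Continuous.mul ?_ hfc
      exact (fourier (-j)).continuous.comp (AddCircle.continuous_mk' T)
    have hg_hi : ∫ x in (π / 2)..(-(T / 2) + T), g x = 0 := by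
      apply intervalIntegral.integral_zero_ae
      refine Eventually.of_forall fun x hx => ?_
      rw [uIoc_of_le (by linarith)] at hx
      simp only [hg, hf_hi x hx.1.le, mul_zero]
    have hg_lo : ∫ x in (-(T / 2))..(-(π / 2)), g x = 0 := by
      apply intervalIntegral.integral_zero_ae
      refine Eventually.of_forall fun x hx => ?_
      rw [uIoc_of_le (by linarith)] at hx
      simp only [hg, hf_lo x hx.2, mul_zero]
    have hg_mid : ∫ x in (-(π / 2))..(π / 2), g x = J a (j * ρ) := by
      rw [J]
      apply intervalIntegral.integral_congr
      intro x hx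
      rw [uIcc_of_le (by linarith)] at hx
      simp only [hg, hf, hcl_mid x hx.1 hx.2, fourier_coe_apply]
      rw [mul_left_comm, ← Complex.exp_add]
      congr 2
      have hpi' : (π : ℂ) ≠ 0 := by exact_mod_cast hpi.ne'
      have hρ' : (ρ : ℂ) ≠ 0 := by exact_mod_cast hρ0.ne'
      rw [hT]
      push_cast
      field_simp
      ring
    have hsplit : ∫ x in (-(T / 2))..(-(T / 2) + T), g x = J a (j * ρ) := by
      rw [← intervalIntegral.integral_add_adjacent_intervals
        (hgc.intervalIntegrable (-(T / 2)) (-(π / 2)))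
        (hgc.intervalIntegrable (-(π / 2)) (-(T / 2) + T)),
        ← intervalIntegral.integral_add_adjacent_intervals
        (hgc.intervalIntegrable (-(π / 2)) (π / 2))
        (hgc.intervalIntegrable (π / 2) (-(T / 2) + T)), hg_lo, hg_hi, hg_mid]
      ring
    have hTT : -(T / 2) + T - -(T / 2) = T := by ring
    have hgg : ∀ x : ℝ, (fourier (-j) (x : AddCircle (-(T / 2) + T - -(T / 2)))) • f x = g x := by
      intro x
      simp only [hg, fourier_coe_apply, hTT, smul_eq_mul]
    simp_rw [hgg]
    rw [hsplit, J_eq ha, Complex.real_smul, ← Complex.ofReal_mul]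
    congr 1
    rw [hT]
    field_simp
    ring
  have hs' : Summable (fourierCoeff F) := by
    have : fourierCoeff F = fun j : ℤ => ((ρ * 2 ^ (-a) * bin a (j * ρ) : ℝ) : ℂ) := funext hcoef
    rw [this]
    exact Complex.summable_ofReal.mpr (hsum.mul_left _)
  have hmain := has_pointwise_sum_fourier_series_of_summable hs' ((0 : ℝ) : AddCircle T)
  have hF0 : F ((0 : ℝ) : AddCircle T) = 1 := by
    have h1 : F ((0 : ℝ) : AddCircle T) = AddCircle.liftIco T (-(T / 2)) f (0 : ℝ) := rfl
    rw [h1, AddCircle.liftIco_coe_apply ⟨by linarith, by linarith⟩]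
    simp [hf, hcl_mid 0 (by linarith) (by linarith)]
  rw [hF0] at hmain
  simp only [hcoef, fourier_coe_apply, Complex.ofReal_zero, mul_zero, zero_div, Complex.exp_zero,
    smul_eq_mul, mul_one] at hmain
  have h1 : HasSum (fun j : ℤ => ρ * 2 ^ (-a) * bin a (j * ρ)) 1 := by
    rw [← Complex.hasSum_ofReal]; simpa using hmain
  have h2 := h1.mul_left (2 ^ a / ρ)
  rw [mul_one] at h2
  have h3 : (fun j : ℤ => 2 ^ a / ρ * (ρ * 2 ^ (-a) * bin a (j * ρ))) =
      fun j : ℤ => bin a (j * ρ) := by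
    funext j
    rw [Real.rpow_neg two_pos.le]
    have : (2:ℝ) ^ a ≠ 0 := by positivity
    field_simp
  rwa [h3] at h2

theorem beta_real {u v : ℝ} (hu : 0 < u) (hv : 0 < v) :
    IntegrableOn (fun x : ℝ => x ^ (u - 1) * (1 - x) ^ (v - 1)) (Ioo 0 1) ∧
    ∫ x in Ioo (0:ℝ) 1, x ^ (u - 1) * (1 - x) ^ (v - 1) =
      Real.Gamma u * Real.Gamma v / Real.Gamma (u + v) := by
  have hpt : ∀ x ∈ Ioo (0:ℝ) 1, (x : ℂ) ^ ((u : ℂ) - 1) * (1 - (x : ℂ)) ^ ((v : ℂ) - 1) =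
      ((x ^ (u - 1) * (1 - x) ^ (v - 1) : ℝ) : ℂ) := by
    intro x hx
    rw [Complex.ofReal_mul, Complex.ofReal_cpow hx.1.le, Complex.ofReal_cpow (by linarith [hx.2])]
    push_cast
    rfl
  have h1 := Complex.betaIntegral_convergent (u := u) (v := v) (by simpa) (by simpa)
  rw [intervalIntegrable_iff_integrableOn_Ioo_of_le zero_le_one] at h1
  have h1' : IntegrableOn (fun x : ℝ => ((x ^ (u - 1) * (1 - x) ^ (v - 1) : ℝ) : ℂ)) (Ioo 0 1) :=
    h1.congr_fun hpt measurableSet_Ioo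
  constructor
  · have h3 := h1'.re
    simp only [Complex.ofReal_re, RCLike.re_to_complex] at h3
    exact h3
  · have h2 := Complex.betaIntegral_eq_Gamma_mul_div u v (by simpa) (by simpa)
    rw [Complex.betaIntegral, intervalIntegral.integral_of_le zero_le_one,
      integral_Ioc_eq_integral_Ioo, setIntegral_congr_fun measurableSet_Ioo hpt,
      integral_complex_ofReal, ← Complex.ofReal_add, Complex.Gamma_ofReal, Complex.Gamma_ofReal,
      Complex.Gamma_ofReal] at h2
    exact_mod_cast h2

theorem bin_neg {a β : ℝ} (hβ : 0 < β) (ha : 0 < a) :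
    bin a (-β) = ∫ x in Ioo (0:ℝ) 1, (1 / π) * (sin (π * β) * (x ^ (β - 1) * (1 - x) ^ a)) := by
  have h := (beta_real hβ (show 0 < a + 1 by linarith)).2
  rw [add_sub_cancel_right] at h
  rw [integral_const_mul, integral_const_mul, h, bin]
  have hG := Real.Gamma_mul_Gamma_one_sub β
  have hGβ := (Real.Gamma_pos_of_pos hβ).ne'
  have hpi := Real.pi_ne_zero
  have h1 : (Real.Gamma (-β + 1))⁻¹ = Real.Gamma β * sin (π * β) / π := by
    rw [show -β + 1 = 1 - β by ring]
    have : Real.Gamma (1 - β) = π / sin (π * β) / Real.Gamma β := by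
      rw [← hG]; field_simp
    rw [this, inv_div, div_div_eq_mul_div]
  rw [div_eq_mul_inv, mul_inv, h1, show a - -β + 1 = β + (a + 1) by ring]
  field_simp

theorem sin_series_nonneg {r θ : ℝ} (hr0 : 0 ≤ r) (hr1 : r < 1) (hs : 0 ≤ sin θ) :
    0 ≤ ∑' m : ℕ, sin (((m : ℝ) + 1) * θ) * r ^ (m + 1) := by
  set z : ℂ := (r : ℂ) * Complex.exp (θ * Complex.I) with hz
  have hnz : ‖z‖ < 1 := by
    rw [hz, norm_mul, Complex.norm_exp_ofReal_mul_I, mul_one, Complex.norm_real,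
      Real.norm_of_nonneg hr0]
    exact hr1
  have h1 := (hasSum_geometric_of_norm_lt_one hnz).mul_left z
  have h2 := Complex.hasSum_im h1
  have h3 : ∀ m : ℕ, (z * z ^ m).im = sin (((m : ℝ) + 1) * θ) * r ^ (m + 1) := by
    intro m
    have : z * z ^ m = ((r ^ (m + 1) : ℝ) : ℂ) *
        Complex.exp (((((m : ℝ) + 1) * θ : ℝ) : ℂ) * Complex.I) := by
      rw [← pow_succ', hz, mul_pow, ← Complex.exp_nat_mul]
      push_cast
      congr 2
      ring
    rw [this, Complex.im_ofReal_mul, Complex.exp_ofReal_mul_I_im, mul_comm]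
  simp_rw [h3] at h2
  rw [h2.tsum_eq]
  have hzi : z.im = r * sin θ := by
    rw [hz, Complex.im_ofReal_mul, Complex.exp_ofReal_mul_I_im]
  have hne : (1 - z) ≠ 0 := by
    intro h
    have : z = 1 := (sub_eq_zero.mp h).symm
    rw [this] at hnz
    simp at hnz
  have : z * (1 - z)⁻¹ = (1 - z)⁻¹ - 1 := by field_simp; ring
  rw [this, Complex.sub_im, Complex.inv_im, Complex.sub_im, Complex.one_im, hzi]
  have : 0 ≤ Complex.normSq (1 - z) := Complex.normSq_nonneg _
  have h4 : 0 ≤ r * sin θ := mul_nonneg hr0 hs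
  simp only [zero_sub, neg_neg, sub_zero]
  positivity

theorem tail_aux {ρ a : ℝ} (hρ0 : 0 < ρ) (hρ1 : ρ ≤ 1) (ha : 0 < a) :
    ∃ S : ℝ, 0 ≤ S ∧ HasSum (fun m : ℕ => bin a (-(((m : ℝ) + 1) * ρ))) S := by
  have hpi := Real.pi_pos
  have hβ : ∀ m : ℕ, 0 < ((m : ℝ) + 1) * ρ := fun m => by positivity
  set G : ℕ → ℝ → ℝ := fun m x => x ^ (((m : ℝ) + 1) * ρ - 1) * (1 - x) ^ a with hG
  set F : ℕ → ℝ → ℝ := fun m x => (1 / π) * (sin (π * (((m : ℝ) + 1) * ρ)) * G m x) with hF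
  have hGint : ∀ m, IntegrableOn (G m) (Ioo 0 1) := by
    intro m
    have := (beta_real (hβ m) (show 0 < a + 1 by linarith)).1
    rwa [add_sub_cancel_right] at this
  have hFint : ∀ m, IntegrableOn (F m) (Ioo 0 1) := fun m => ((hGint m).const_mul _).const_mul _
  have hGnn : ∀ m, ∀ x ∈ Ioo (0:ℝ) 1, 0 ≤ G m x := by
    intro m x hx
    exact mul_nonneg (rpow_nonneg hx.1.le _) (rpow_nonneg (by linarith [hx.2]) _)
  have hpow : ∀ m : ℕ, ∀ x ∈ Ioo (0:ℝ) 1, G m x = (x ^ ρ) ^ (m + 1) * (x⁻¹ * (1 - x) ^ a) := by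
    intro m x hx
    simp only [hG]
    rw [Real.rpow_sub hx.1, Real.rpow_one, mul_comm ((m : ℝ) + 1) ρ, Real.rpow_mul hx.1.le]
    have : ((x ^ ρ) ^ ((m : ℝ) + 1)) = (x ^ ρ) ^ (m + 1) := by
      exact_mod_cast Real.rpow_natCast (x ^ ρ) (m + 1)
    rw [this]
    ring
  have hxρ : ∀ x ∈ Ioo (0:ℝ) 1, 0 ≤ x ^ ρ ∧ x ^ ρ < 1 := fun x hx =>
    ⟨rpow_nonneg hx.1.le _, Real.rpow_lt_one hx.1.le hx.2 hρ0⟩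
  have hGsum : Summable (fun m => ∫ x in Ioo (0:ℝ) 1, G m x) := by
    have hb := (beta_real hρ0 ha).1
    refine summable_of_sum_range_le (c := ∫ x in Ioo (0:ℝ) 1,
      (1 / ρ) * (x ^ (ρ - 1) * (1 - x) ^ (a - 1))) ?_ ?_
    · intro m
      exact setIntegral_nonneg measurableSet_Ioo (hGnn m)
    · intro M
      rw [← integral_finsetSum _ (fun m _ => hGint m)]
      refine setIntegral_mono_on (integrable_finsetSum _ (fun m _ => hGint m))
        (hb.const_mul _) measurableSet_Ioo ?_
      intro x hx
      obtain ⟨hq0, hq1⟩ := hxρ x hx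
      have hx1 : 0 < 1 - x := by linarith [hx.2]
      have e1 : ∑ m ∈ Finset.range M, G m x =
          (∑ m ∈ Finset.range M, (x ^ ρ) ^ m) * (x ^ ρ * (x⁻¹ * (1 - x) ^ a)) := by
        rw [Finset.sum_mul]
        refine Finset.sum_congr rfl fun m _ => ?_
        rw [hpow m x hx]; ring
      have e2 : ∑ m ∈ Finset.range M, (x ^ ρ) ^ m ≤ (1 / ρ) * (1 - x)⁻¹ := by
        have h1 : ∑ m ∈ Finset.range M, (x ^ ρ) ^ m ≤ (1 - x ^ ρ)⁻¹ := by
          rw [← tsum_geometric_of_lt_one hq0 hq1]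
          exact (summable_geometric_of_lt_one hq0 hq1).sum_le_tsum _
            (fun i _ => pow_nonneg hq0 i)
        have h2 : x ^ ρ ≤ 1 + ρ * (x - 1) := by
          have := rpow_one_add_le_one_add_mul_self (s := x - 1) (by linarith [hx.1]) hρ0.le hρ1
          simpa using this
        have h3 : (1 - x ^ ρ)⁻¹ ≤ (ρ * (1 - x))⁻¹ :=
          inv_anti₀ (by positivity) (by linarith)
        calc _ ≤ _ := h1
          _ ≤ _ := h3
          _ = _ := by rw [mul_inv, one_div]
      rw [e1]
      have hx0 := hx.1
      calc _ ≤ ((1 / ρ) * (1 - x)⁻¹) * (x ^ ρ * (x⁻¹ * (1 - x) ^ a)) :=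
            mul_le_mul_of_nonneg_right e2 (by positivity)
        _ = _ := by
            rw [Real.rpow_sub hx.1, Real.rpow_one, Real.rpow_sub hx1, Real.rpow_one]
            ring
  have hFsum : Summable (fun m => ∫ x in Ioo (0:ℝ) 1, ‖F m x‖) := by
    refine Summable.of_nonneg_of_le (fun m => integral_nonneg fun x => norm_nonneg _) ?_
      (hGsum.mul_left (1 / π))
    intro m
    rw [← integral_const_mul]
    refine setIntegral_mono_on (hFint m).norm ((hGint m).const_mul _) measurableSet_Ioo ?_
    intro x hx
    have h0 := hGnn m x hx
    simp only [hF]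
    rw [norm_mul, norm_mul, Real.norm_of_nonneg h0, Real.norm_of_nonneg (by positivity)]
    have : ‖sin (π * (((m : ℝ) + 1) * ρ))‖ ≤ 1 := Real.abs_sin_le_one _
    gcongr
    nlinarith
  refine ⟨∫ x in Ioo (0:ℝ) 1, ∑' m, F m x, ?_, ?_⟩
  · refine setIntegral_nonneg measurableSet_Ioo fun x hx => ?_
    obtain ⟨hq0, hq1⟩ := hxρ x hx
    have hs : 0 ≤ sin (π * ρ) := Real.sin_nonneg_of_nonneg_of_le_pi (by positivity) (by nlinarith)
    have h1 := sin_series_nonneg hq0 hq1 hs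
    have h2 : ∀ m : ℕ, F m x = (sin (((m : ℝ) + 1) * (π * ρ)) * (x ^ ρ) ^ (m + 1)) *
        ((1 / π) * (x⁻¹ * (1 - x) ^ a)) := by
      intro m
      simp only [hF]
      rw [hpow m x hx, show π * (((m : ℝ) + 1) * ρ) = ((m : ℝ) + 1) * (π * ρ) by ring]
      ring
    simp_rw [h2]
    rw [tsum_mul_right]
    have hx0 := hx.1
    have hx1 : 0 < 1 - x := by linarith [hx.2]
    positivity
  · have := hasSum_integral_of_summable_integral_norm hFint hFsum
    have h4 : (fun m : ℕ => bin a (-(((m : ℝ) + 1) * ρ))) =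
        fun m : ℕ => ∫ x in Ioo (0:ℝ) 1, F m x := funext fun m => bin_neg (hβ m) ha
    rw [h4]
    exact this

/-- Sum of fractional (Gamma-function) binomial coefficients:
for `ρ ∈ (0,1]` and `n ∈ ℕ`,
`∑_{i=0}^n Γ(nρ+1)/(Γ(iρ+1)·Γ((n−i)ρ+1)) ≤ 2^(nρ)/ρ`. -/
theorem fractional_binomial_sum_le (ρ : ℝ) (hρ0 : 0 < ρ) (hρ1 : ρ ≤ 1) (n : ℕ) :
    ∑ i ∈ Finset.range (n + 1),
        Real.Gamma ((n : ℝ) * ρ + 1) /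
          (Real.Gamma ((i : ℝ) * ρ + 1) * Real.Gamma (((n : ℝ) - (i : ℝ)) * ρ + 1))
      ≤ (2 : ℝ) ^ ((n : ℝ) * ρ) / ρ := by
  rcases Nat.eq_zero_or_pos n with rfl | hn
  · simpa using (one_le_inv₀ hρ0).mpr hρ1
  have ha : 0 < (n : ℝ) * ρ := by positivity
  obtain ⟨S, hS0, hS⟩ := tail_aux hρ0 hρ1 ha
  set a : ℝ := (n : ℝ) * ρ with haρ
  have hsumeq : ∑ i ∈ Finset.range (n + 1), Real.Gamma (a + 1) /
      (Real.Gamma ((i : ℝ) * ρ + 1) * Real.Gamma (((n : ℝ) - (i : ℝ)) * ρ + 1)) =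
      ∑ i ∈ Finset.range (n + 1), bin a ((i : ℝ) * ρ) := by
    refine Finset.sum_congr rfl fun i _ => ?_
    rw [bin, haρ, sub_mul]
  rw [hsumeq]
  have hpos : HasSum (fun i : ℕ => bin a (((i : ℤ) : ℝ) * ρ))
      (S + ∑ i ∈ Finset.range (n + 1), bin a ((i : ℝ) * ρ)) := by
    have h1 : HasSum (fun m : ℕ => bin a (((m + (n + 1) : ℕ) : ℝ) * ρ)) S := by
      convert hS using 2 with m
      rw [← bin_symm]
      congr 1
      rw [haρ]; push_cast; ring
    have := (hasSum_nat_add_iff (f := fun i : ℕ => bin a ((i : ℝ) * ρ)) (n + 1)).mp h1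
    simpa using this
  have hneg : HasSum (fun m : ℕ => bin a (((-((m : ℤ) + 1) : ℤ) : ℝ) * ρ)) S := by
    convert hS using 2 with m
    congr 1
    push_cast; ring
  have htot := HasSum.of_nat_of_neg_add_one (f := fun j : ℤ => bin a ((j : ℝ) * ρ)) hpos hneg
  have := htot.unique (hasSum_bin hρ0 hρ1 ha htot.summable)
  linarith
end

section
/- Let G = (δ : G₁ → G₀, ▷) be a crossed module of groups. Then the double group D(G) satisfies the interchange law: for squares X, Y, Z, W ∈ D(G) for which all compositions below are defined, (X ⊙_h Y) ⊙_v (Z ⊙_h W) = (X ⊙_v Z) ⊙_h (Y ⊙_v W). -/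
/-- **Interchange law in the double group of a crossed module of groups.**
For composable squares `X = (x₁,y₁,z₁,w₁,E₁)`, `Y = (x₂,y₂,z₂,y₁,E₂)`,
`Z = (z₁,y₃,z₃,w₃,E₃)`, `W = (z₂,y₄,z₄,y₃,E₄)` of `D(G)` we have
`(X ⊙_h Y) ⊙_v (Z ⊙_h W) = (X ⊙_v Z) ⊙_h (Y ⊙_v W)`. -/
theorem double_group_interchange {G₀ G₁ : Type*} [Group G₀] [Group G₁]
    (δ : G₁ →* G₀) (act : G₀ → G₁ → G₁)
    (hact_one : ∀ E, act 1 E = E)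
    (hact_mul : ∀ g h E, act (g * h) E = act g (act h E))
    (hact_hom : ∀ g E F, act g (E * F) = act g E * act g F)
    (cm1 : ∀ g E, δ (act g E) = g * δ E * g⁻¹)
    (cm2 : ∀ E F, act (δ E) F = E * F * E⁻¹)
    (x₁ y₁ z₁ w₁ x₂ y₂ z₂ y₃ z₃ w₃ y₄ z₄ : G₀) (E₁ E₂ E₃ E₄ : G₁)
    (hE₁ : δ E₁ = x₁ * y₁ * z₁⁻¹ * w₁⁻¹)
    (hE₂ : δ E₂ = x₂ * y₂ * z₂⁻¹ * y₁⁻¹)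
    (hE₃ : δ E₃ = z₁ * y₃ * z₃⁻¹ * w₃⁻¹)
    (hE₄ : δ E₄ = z₂ * y₄ * z₄⁻¹ * y₃⁻¹) :
    ((x₁ * x₂, y₂ * y₄, z₃ * z₄, w₁ * w₃,
        (act x₁ E₂ * E₁) * act w₁ (act z₁ E₄ * E₃)) : G₀ × G₀ × G₀ × G₀ × G₁) =
      ((x₁ * x₂, y₂ * y₄, z₃ * z₄, w₁ * w₃,
        act x₁ (E₂ * act y₁ E₄) * (E₁ * act w₁ E₃)) : G₀ × G₀ × G₀ × G₀ × G₁) := by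
  have h : act x₁ (act y₁ E₄) = E₁ * act w₁ (act z₁ E₄) * E₁⁻¹ := by
    rw [← cm2, ← hact_mul, ← hact_mul, ← hact_mul, hE₁]
    congr 1
    group
  have key : (act x₁ E₂ * E₁) * act w₁ (act z₁ E₄ * E₃) =
      act x₁ (E₂ * act y₁ E₄) * (E₁ * act w₁ E₃) := by
    rw [hact_hom, hact_hom, h]
    group
  rw [key]
end
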